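/- Let n ≥ 1, let a ∈ (1, 2], and let ρ₁, ρ₂ be density matrices (n×n complex positive semidefinite matrices of trace 1) such that ρ_Av := (ρ₁ + ρ₂)/2 is positive definite. Then log 2 ≥ (1/2)·[ H_a(ρ₁, ρ_Av) + H_a(ρ₂, ρ_Av) ] ≥ S(ρ_Av) − (1/2)·S(ρ₁) − (1/2)·S(ρ₂). -/

import Mathlib

open Matrix ComplexOrder

/-- Apply a real function to a Hermitian matrix via the spectral decomposition
`A = U D U*`: the result is `U (f(D)) U*` where `f` acts on the diagonal. -/
noncomputable def mfun {m : Type*} [Fintype m] [DecidableEq m]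
    (f : ℝ → ℝ) (A : Matrix m m ℂ) : Matrix m m ℂ :=
  if hA : A.IsHermitian then hA.cfc f else 0

/-- Matrix logarithm via spectral decomposition, with the convention `log 0 = 0`
(note `Real.log 0 = 0`). -/
noncomputable def matLog {m : Type*} [Fintype m] [DecidableEq m]
    (A : Matrix m m ℂ) : Matrix m m ℂ :=
  mfun Real.log A

/-- The positive semidefinite square root of a positive semidefinite matrix,
via spectral decomposition. -/
noncomputable def matSqrt {m : Type*} [Fintype m] [DecidableEq m]
    (A : Matrix m m ℂ) : Matrix m m ℂ :=
  mfun Real.sqrt A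

/-- Real power of a (positive semidefinite / positive definite) matrix via spectral
decomposition. -/
noncomputable def matRpow {m : Type*} [Fintype m] [DecidableEq m]
    (t : ℝ) (A : Matrix m m ℂ) : Matrix m m ℂ :=
  mfun (fun u => u ^ t) A

/-- The von Neumann entropy `S(ρ) = -Tr(ρ log ρ)`. -/
noncomputable def vnEntropy {m : Type*} [Fintype m] [DecidableEq m]
    (ρ : Matrix m m ℂ) : ℝ :=
  -(Matrix.trace (ρ * matLog ρ)).re

/-- The quantum relative entropy `H(ρ, γ) = Tr(ρ (log ρ - log γ))`. -/
noncomputable def relEntropy {m : Type*} [Fintype m] [DecidableEq m]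
    (ρ γ : Matrix m m ℂ) : ℝ :=
  (Matrix.trace (ρ * (matLog ρ - matLog γ))).re

/-- The trace norm of a Hermitian matrix: the sum of the absolute values of its
eigenvalues. -/
noncomputable def traceNorm {m : Type*} [Fintype m] [DecidableEq m]
    (A : Matrix m m ℂ) : ℝ :=
  if hA : A.IsHermitian then ∑ i, |hA.eigenvalues i| else 0

/-- A density matrix: positive semidefinite with trace 1. -/
def IsDensity {m : Type*} [Fintype m] [DecidableEq m] (ρ : Matrix m m ℂ) : Prop :=
  ρ.PosSemidef ∧ Matrix.trace ρ = 1

/-- The binary entropy `h(x) = -x log x - (1-x) log (1-x)`. -/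
noncomputable def binEntropy (x : ℝ) : ℝ :=
  -(x * Real.log x) - (1 - x) * Real.log (1 - x)

/-- The Renyi relative entropy `H_a(ρ,γ) = (a-1)⁻¹ log Tr(ρ^a γ^(1-a))`. -/
noncomputable def renyiRel {m : Type*} [Fintype m] [DecidableEq m]
    (a : ℝ) (ρ γ : Matrix m m ℂ) : ℝ :=
  (a - 1)⁻¹ * Real.log (Matrix.trace (matRpow a ρ * matRpow (1 - a) γ)).re

/-- The sandwiched Renyi relative entropy
`H̃_a(ρ,γ) = (a-1)⁻¹ log Tr((γ^((1-a)/(2a)) ρ γ^((1-a)/(2a)))^a)`. -/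
noncomputable def sandRenyiRel {m : Type*} [Fintype m] [DecidableEq m]
    (a : ℝ) (ρ γ : Matrix m m ℂ) : ℝ :=
  (a - 1)⁻¹ * Real.log
    (Matrix.trace (matRpow a
      (matRpow ((1 - a) / (2 * a)) γ * ρ * matRpow ((1 - a) / (2 * a)) γ))).re

/-!
Lower bound. In eigenbases of `ρ` and `γ` every trace `Tr (f(ρ) g(γ))` is a sum of the numbers
`f(λᵢ) g(μⱼ)` against the same nonnegative weights, so scalar inequalities pass to traces. The
inequality used is that `λ ^ a * μ ^ (1 - a) = λ * exp ((a - 1) * (log λ - log μ))` lies above the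
tangent of `exp` at `s`. With `s = (a - 1) * H(ρ, γ)` this gives
`exp ((a - 1) * H(ρ, γ)) ≤ Tr (ρ ^ a * γ ^ (1 - a))`, that is, `H(ρ, γ) ≤ H_a(ρ, γ)`. The average of
`H(ρᵢ, ρ_Av)` is the entropy gap.

Upper bound. If `ρ ≤ γ`, then `ρ ^ (a - 1) ≤ γ ^ (a - 1)` by the Löwner–Heinz inequality, which is
where `a ≤ 2` enters. A Schur complement turns this into `X * γ ^ (1 - a) * X ≤ 1` with
`X = ρ ^ ((a - 1) / 2)`, and pairing with `ρ` gives `Tr (ρ ^ a * γ ^ (1 - a)) ≤ Tr ρ`. By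
homogeneity `ρ ≤ c • γ` implies `H_a(ρ, γ) ≤ log c` for a state `ρ`; here `ρᵢ ≤ 2 • ρ_Av`.
-/

section MatrixOrder

open scoped MatrixOrder

variable {𝕜 m n : Type*} [RCLike 𝕜] [Fintype m] [Fintype n]

lemma trace_mul_nonneg_of_nonneg {A B : Matrix m m 𝕜} (hA : 0 ≤ A) (hB : 0 ≤ B) :
    0 ≤ (A * B).trace := by
  classical
  obtain ⟨C, rfl⟩ := CStarAlgebra.nonneg_iff_eq_star_mul_self.mp hA
  rw [mul_assoc, trace_mul_comm]
  exact (hB.posSemidef.mul_mul_conjTranspose_same C).trace_nonneg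

/-- Both sides say that the block matrix `[M, X; Xᴴ, 1]` is positive semidefinite: these are its two
Schur complements. -/
lemma conjTranspose_mul_inv_mul_le_one_iff [DecidableEq m] [DecidableEq n] {M : Matrix m m 𝕜}
    (hM : M.PosDef) (X : Matrix m n 𝕜) : Xᴴ * M⁻¹ * X ≤ 1 ↔ X * Xᴴ ≤ M := by
  have := hM.isUnit.invertible
  have := invertibleOne (α := Matrix n n 𝕜)
  rw [Matrix.le_iff, Matrix.le_iff, ← PosDef.fromBlocks₁₁ X 1 hM,
    PosDef.fromBlocks₂₂ M X PosDef.one, inv_one, Matrix.mul_one]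

end MatrixOrder

section MatrixFunctions

open scoped MatrixOrder

variable {m : Type*} [Fintype m] [DecidableEq m] {A B : Matrix m m ℂ}

lemma continuousOn_spectrum_real (A : Matrix m m ℂ) (f : ℝ → ℝ) : ContinuousOn f (spectrum ℝ A) :=
  finite_real_spectrum.continuousOn f

lemma mfun_eq_cfc (f : ℝ → ℝ) (A : Matrix m m ℂ) : mfun f A = cfc f A := by
  by_cases hA : A.IsHermitian
  · rw [mfun, dif_pos hA, hA.cfc_eq]
  · rw [mfun, dif_neg hA]
    exact (cfc_apply_of_not_predicate A hA).symm

lemma matRpow_eq_rpow (hA : 0 ≤ A) (t : ℝ) : matRpow t A = A ^ t := by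
  rw [matRpow, mfun_eq_cfc, CFC.rpow_eq_cfc_real hA]

lemma matRpow_one (hA : 0 ≤ A) : matRpow 1 A = A := by
  rw [matRpow_eq_rpow hA, CFC.rpow_one A hA]

lemma isHermitian_matRpow (t : ℝ) (A : Matrix m m ℂ) : (matRpow t A).IsHermitian := by
  rw [matRpow, mfun_eq_cfc]
  exact cfc_predicate _ A

lemma posDef_matRpow (hB : B.PosDef) (t : ℝ) : (matRpow t B).PosDef := by
  rw [matRpow_eq_rpow hB.posSemidef.nonneg]
  exact (IsStrictlyPositive.rpow B t hB.isStrictlyPositive).posDef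

lemma matRpow_neg (hB : B.PosDef) (t : ℝ) : matRpow (-t) B = (matRpow t B)⁻¹ := by
  have hB₀ := hB.posSemidef.nonneg
  refine (inv_eq_left_inv ?_).symm
  rw [matRpow_eq_rpow hB₀, matRpow_eq_rpow hB₀, CFC.rpow_neg_mul_rpow t hB.isStrictlyPositive]

lemma matRpow_add_of_nonneg (hA : 0 ≤ A) {s t : ℝ} (hs : 0 ≤ s) (ht : 0 ≤ t) :
    matRpow (s + t) A = matRpow s A * matRpow t A := by
  simp only [matRpow, mfun_eq_cfc]
  rw [← cfc_mul _ _ A (continuousOn_spectrum_real A _) (continuousOn_spectrum_real A _)]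
  exact cfc_congr fun x hx ↦ Real.rpow_add_of_nonneg (spectrum_nonneg_of_nonneg hA hx) hs ht

lemma matRpow_smul (hA : 0 ≤ A) {c : ℝ} (hc : 0 ≤ c) (t : ℝ) :
    matRpow t (c • A) = c ^ t • matRpow t A := by
  simp only [matRpow, mfun_eq_cfc]
  rw [← cfc_comp_smul c _ A ((finite_real_spectrum.image _).continuousOn _) hA.isSelfAdjoint,
    ← cfc_smul _ _ A (continuousOn_spectrum_real A _)]
  exact cfc_congr fun x hx ↦ Real.mul_rpow hc (spectrum_nonneg_of_nonneg hA hx)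

open scoped Matrix.Norms.L2Operator in
lemma matRpow_le_matRpow (hA : 0 ≤ A) (hAB : A ≤ B) {t : ℝ} (ht : t ∈ Set.Icc (0 : ℝ) 1) :
    matRpow t A ≤ matRpow t B := by
  rw [matRpow_eq_rpow hA, matRpow_eq_rpow (hA.trans hAB)]
  exact CFC.rpow_le_rpow ht hAB

end MatrixFunctions

section EigenOverlap

variable {m : Type*} [Fintype m] [DecidableEq m] {A B : Matrix m m ℂ}

/-- The squared overlap `|⟨uᵢ, vⱼ⟩|²` of the `i`-th eigenvector of `A` with the `j`-th eigenvector
of `B`: the weights that turn traces `Tr (f(A) g(B))` into scalar sums over pairs of eigenvalues. -/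
noncomputable def eigenOverlap (hA : A.IsHermitian) (hB : B.IsHermitian) (i j : m) : ℝ :=
  Complex.normSq
    (((hA.eigenvectorUnitary : Matrix m m ℂ)ᴴ * (hB.eigenvectorUnitary : Matrix m m ℂ)) i j)

lemma eigenOverlap_nonneg (hA : A.IsHermitian) (hB : B.IsHermitian) (i j : m) :
    0 ≤ eigenOverlap hA hB i j :=
  Complex.normSq_nonneg _

lemma trace_diagonal_mul_mul_diagonal_mul_conjTranspose {n : Type*} [Fintype n] [DecidableEq n]
    (d : m → ℂ) (e : n → ℂ) (W : Matrix m n ℂ) :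
    (diagonal d * W * (diagonal e * Wᴴ)).trace =
      ∑ i, ∑ j, Complex.normSq (W i j) * (d i * e j) := by
  simp only [trace, diag_apply, mul_apply (M := diagonal d * W), diagonal_mul, conjTranspose_apply,
    Complex.normSq_eq_conj_mul_self, RCLike.star_def]
  exact Finset.sum_congr rfl fun i _ ↦ Finset.sum_congr rfl fun j _ ↦ by ring

lemma re_trace_cfc_mul_cfc (hA : A.IsHermitian) (hB : B.IsHermitian) (f g : ℝ → ℝ) :
    (cfc f A * cfc g B).trace.re =
      ∑ i, ∑ j, eigenOverlap hA hB i j * (f (hA.eigenvalues i) * g (hB.eigenvalues j)) := by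
  set U := (hA.eigenvectorUnitary : Matrix m m ℂ)
  set V := (hB.eigenvectorUnitary : Matrix m m ℂ)
  set D : Matrix m m ℂ := diagonal fun i ↦ (f (hA.eigenvalues i) : ℂ)
  set E : Matrix m m ℂ := diagonal fun j ↦ (g (hB.eigenvalues j) : ℂ)
  have hfA : cfc f A = U * D * Uᴴ := by
    rw [hA.cfc_eq, Matrix.IsHermitian.cfc, Unitary.conjStarAlgAut_apply]
    rfl
  have hgB : cfc g B = V * E * Vᴴ := by
    rw [hB.cfc_eq, Matrix.IsHermitian.cfc, Unitary.conjStarAlgAut_apply]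
    rfl
  have hcycle : (cfc f A * cfc g B).trace = (D * (Uᴴ * V) * (E * (Uᴴ * V)ᴴ)).trace := by
    rw [hfA, hgB, mul_assoc U, mul_assoc U, trace_mul_comm]
    simp only [conjTranspose_mul, conjTranspose_conjTranspose, mul_assoc]
  rw [hcycle, trace_diagonal_mul_mul_diagonal_mul_conjTranspose]
  exact_mod_cast Complex.ofReal_re _

lemma re_trace_cfc (hA : A.IsHermitian) (hB : B.IsHermitian) (f : ℝ → ℝ) :
    (cfc f A).trace.re = ∑ i, ∑ j, eigenOverlap hA hB i j * f (hA.eigenvalues i) := by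
  simpa [cfc_const_one ℝ B hB.isSelfAdjoint] using re_trace_cfc_mul_cfc hA hB f fun _ ↦ 1

lemma re_trace_eq_sum_eigenOverlap (hA : A.IsHermitian) (hB : B.IsHermitian) :
    A.trace.re = ∑ i, ∑ j, eigenOverlap hA hB i j * hA.eigenvalues i := by
  simpa [cfc_id' ℝ A hA.isSelfAdjoint] using re_trace_cfc hA hB fun x ↦ x

lemma relEntropy_eq_sum_eigenOverlap (hA : A.IsHermitian) (hB : B.IsHermitian) :
    relEntropy A B = ∑ i, ∑ j, eigenOverlap hA hB i j *
      (hA.eigenvalues i * Real.log (hA.eigenvalues i) -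
        hA.eigenvalues i * Real.log (hB.eigenvalues j)) := by
  have hid : cfc (fun x : ℝ ↦ x) A = A := cfc_id' ℝ A hA.isSelfAdjoint
  have hself : A * cfc Real.log A = cfc (fun x ↦ x * Real.log x) A := by
    rw [cfc_mul _ _ A (continuousOn_spectrum_real A _) (continuousOn_spectrum_real A _), hid]
  have hcross := re_trace_cfc_mul_cfc hA hB (fun x ↦ x) Real.log
  rw [hid] at hcross
  simp only [relEntropy, matLog, mfun_eq_cfc, mul_sub, trace_sub, Complex.sub_re, hself,
    hcross, re_trace_cfc hA hB, Finset.sum_sub_distrib]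

end EigenOverlap

section RelativeEntropy

open scoped MatrixOrder

variable {m : Type*} [Fintype m] [DecidableEq m] {A B : Matrix m m ℂ}

lemma exp_mul_tangent_le_rpow_mul_rpow {x y : ℝ} (hx : 0 ≤ x) (hy : 0 < y) (a s : ℝ) :
    Real.exp s * ((1 - s) * x + (a - 1) * (x * Real.log x - x * Real.log y)) ≤
      x ^ a * y ^ (1 - a) := by
  obtain rfl | hx := hx.eq_or_lt
  · simpa using mul_nonneg (Real.rpow_nonneg le_rfl a) (Real.rpow_nonneg hy.le (1 - a))
  set r := (a - 1) * (Real.log x - Real.log y)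
  calc Real.exp s * ((1 - s) * x + (a - 1) * (x * Real.log x - x * Real.log y))
      = x * (Real.exp s * (r - s + 1)) := by ring
    _ ≤ x * (Real.exp s * Real.exp (r - s)) := by gcongr; exact Real.add_one_le_exp _
    _ = Real.exp (Real.log x) * Real.exp r := by
      rw [← Real.exp_add, add_sub_cancel, Real.exp_log hx]
    _ = x ^ a * y ^ (1 - a) := by
      rw [Real.rpow_def_of_pos hx, Real.rpow_def_of_pos hy, ← Real.exp_add, ← Real.exp_add]
      congr 1
      ring

lemma exp_mul_tangent_le_re_trace_matRpow_mul_matRpow (hA : A.PosSemidef) (hB : B.PosDef)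
    (a s : ℝ) :
    Real.exp s * ((1 - s) * A.trace.re + (a - 1) * relEntropy A B) ≤
      (matRpow a A * matRpow (1 - a) B).trace.re := by
  have hA' := hA.isHermitian
  have hB' := hB.isHermitian
  simp only [matRpow, mfun_eq_cfc]
  rw [re_trace_cfc_mul_cfc hA' hB', re_trace_eq_sum_eigenOverlap hA' hB',
    relEntropy_eq_sum_eigenOverlap hA' hB']
  simp only [Finset.mul_sum, ← Finset.sum_add_distrib]
  refine Finset.sum_le_sum fun i _ ↦ Finset.sum_le_sum fun j _ ↦ ?_
  calc _ = eigenOverlap hA' hB' i j * _ := by ring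
    _ ≤ _ := mul_le_mul_of_nonneg_left
      (exp_mul_tangent_le_rpow_mul_rpow (hA.eigenvalues_nonneg i) (hB.eigenvalues_pos j) a s)
      (eigenOverlap_nonneg hA' hB' i j)

lemma exp_mul_relEntropy_le_re_trace_matRpow_mul_matRpow (hA : IsDensity A) (hB : B.PosDef)
    (a : ℝ) :
    Real.exp ((a - 1) * relEntropy A B) ≤ (matRpow a A * matRpow (1 - a) B).trace.re := by
  have h := exp_mul_tangent_le_re_trace_matRpow_mul_matRpow hA.1 hB a ((a - 1) * relEntropy A B)
  simpa [hA.2] using h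

lemma re_trace_matRpow_mul_matRpow_pos (hA : IsDensity A) (hB : B.PosDef) (a : ℝ) :
    0 < (matRpow a A * matRpow (1 - a) B).trace.re :=
  (Real.exp_pos _).trans_le (exp_mul_relEntropy_le_re_trace_matRpow_mul_matRpow hA hB a)

lemma relEntropy_le_renyiRel (hA : IsDensity A) (hB : B.PosDef) {a : ℝ} (ha : 1 < a) :
    relEntropy A B ≤ renyiRel a A B := by
  rw [renyiRel, le_inv_mul_iff₀ (sub_pos.mpr ha),
    Real.le_log_iff_exp_le (re_trace_matRpow_mul_matRpow_pos hA hB a)]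
  exact exp_mul_relEntropy_le_re_trace_matRpow_mul_matRpow hA hB a

lemma re_trace_matRpow_mul_matRpow_le_re_trace (hA : 0 ≤ A) (hB : B.PosDef) (hAB : A ≤ B) {a : ℝ}
    (ha : a ∈ Set.Icc (1 : ℝ) 2) :
    (matRpow a A * matRpow (1 - a) B).trace.re ≤ A.trace.re := by
  set X := matRpow ((a - 1) / 2) A
  set M := matRpow (a - 1) B
  have hX : Xᴴ = X := isHermitian_matRpow _ A
  have hexp : 0 ≤ (a - 1) / 2 := by linarith [ha.1]
  have hXX : matRpow (a - 1) A = X * X := by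
    rw [← matRpow_add_of_nonneg hA hexp hexp, add_halves]
  have hXAX : matRpow a A = X * A * X := by
    conv_rhs => rw [← matRpow_one hA]
    rw [← matRpow_add_of_nonneg hA hexp zero_le_one,
      ← matRpow_add_of_nonneg hA (add_nonneg hexp zero_le_one) hexp]
    congr 1
    ring
  have hM : matRpow (1 - a) B = M⁻¹ := by rw [← neg_sub, matRpow_neg hB]
  have hXM : X * X ≤ M :=
    hXX ▸ matRpow_le_matRpow hA hAB ⟨by linarith [ha.1], by linarith [ha.2]⟩
  have hcontr : X * M⁻¹ * X ≤ 1 := by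
    simpa only [hX] using
      (conjTranspose_mul_inv_mul_le_one_iff (posDef_matRpow hB _) X).mpr (by rwa [hX])
  have htrace : (matRpow a A * matRpow (1 - a) B).trace = (A * (X * M⁻¹ * X)).trace := by
    rw [hXAX, hM, mul_assoc X A X, mul_assoc X, trace_mul_comm]
    simp only [mul_assoc]
  have hnonneg := trace_mul_nonneg_of_nonneg hA (sub_nonneg.mpr hcontr)
  rw [Matrix.mul_sub, Matrix.mul_one, trace_sub, ← htrace, sub_nonneg] at hnonneg
  exact (Complex.le_def.mp hnonneg).1

lemma renyiRel_le_log_of_le_smul (hA : IsDensity A) (hB : B.PosDef) {c : ℝ} (hc : 0 < c)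
    (hAB : A ≤ c • B) {a : ℝ} (ha : a ∈ Set.Ioc (1 : ℝ) 2) :
    renyiRel a A B ≤ Real.log c := by
  have hle := re_trace_matRpow_mul_matRpow_le_re_trace hA.1.nonneg (hB.smul hc) hAB
    (Set.Ioc_subset_Icc_self ha)
  rw [matRpow_smul hB.posSemidef.nonneg hc.le, mul_smul_comm, trace_smul, Complex.smul_re,
    smul_eq_mul, hA.2, Complex.one_re, ← neg_sub a 1, Real.rpow_neg hc.le,
    inv_mul_le_one₀ (Real.rpow_pos_of_pos hc _), neg_sub] at hle
  rw [renyiRel, inv_mul_le_iff₀ (sub_pos.mpr ha.1), ← Real.log_rpow hc]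
  exact Real.log_le_log (re_trace_matRpow_mul_matRpow_pos hA hB a) hle

end RelativeEntropy

section Ensemble

lemma le_inv_smul_sum_smul {ι E : Type*} [Fintype ι] [AddCommGroup E] [PartialOrder E]
    [IsOrderedAddMonoid E] [Module ℝ E] [PosSMulMono ℝ E] {p : ι → ℝ} (hp : ∀ i, 0 ≤ p i)
    {x : ι → E} (hx : ∀ i, 0 ≤ x i) {i : ι} (hi : 0 < p i) :
    x i ≤ (p i)⁻¹ • ∑ j, p j • x j := by
  rw [le_inv_smul_iff_of_pos hi]
  exact Finset.single_le_sum (f := fun j ↦ p j • x j)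
    (fun j _ ↦ smul_nonneg (hp j) (hx j)) (Finset.mem_univ i)

open scoped MatrixOrder

variable {ι m : Type*} [Fintype ι] [Fintype m] [DecidableEq m]

lemma sum_mul_relEntropy_eq_vnEntropy_sub_sum (p : ι → ℝ) (ρ : ι → Matrix m m ℂ) :
    ∑ i, p i * relEntropy (ρ i) (∑ j, p j • ρ j) =
      vnEntropy (∑ i, p i • ρ i) - ∑ i, p i * vnEntropy (ρ i) := by
  have hAv (L : Matrix m m ℂ) :
      ((∑ i, p i • ρ i) * L).trace.re = ∑ i, p i * (ρ i * L).trace.re := by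
    simp only [Finset.sum_mul, trace_sum, Complex.re_sum, smul_mul_assoc, trace_smul,
      Complex.smul_re, smul_eq_mul]
  simp only [relEntropy, vnEntropy, hAv, mul_sub, trace_sub, Complex.sub_re, mul_neg,
    Finset.sum_sub_distrib, Finset.sum_neg_distrib]
  ring

theorem renyi_half_mixture_bounds_general {a : ℝ} (ha : a ∈ Set.Ioc (1 : ℝ) 2) {p : ι → ℝ}
    (hp : ∀ i, 0 ≤ p i) {ρ : ι → Matrix m m ℂ} (hρ : ∀ i, IsDensity (ρ i))
    (hAv : (∑ i, p i • ρ i).PosDef) :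
    ∑ i, p i * renyiRel a (ρ i) (∑ j, p j • ρ j) ≤ ∑ i, Real.negMulLog (p i) ∧
    vnEntropy (∑ i, p i • ρ i) - ∑ i, p i * vnEntropy (ρ i) ≤
      ∑ i, p i * renyiRel a (ρ i) (∑ j, p j • ρ j) := by
  constructor
  · refine Finset.sum_le_sum fun i _ ↦ ?_
    obtain hi | hi := (hp i).eq_or_lt
    · simp [← hi]
    · have hle := renyiRel_le_log_of_le_smul (hρ i) hAv (inv_pos.mpr hi)
        (le_inv_smul_sum_smul hp (fun j ↦ (hρ j).1.nonneg) hi) ha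
      rw [Real.log_inv] at hle
      rw [Real.negMulLog, neg_mul, ← mul_neg]
      exact mul_le_mul_of_nonneg_left hle (hp i)
  · rw [← sum_mul_relEntropy_eq_vnEntropy_sub_sum]
    exact Finset.sum_le_sum fun i _ ↦
      mul_le_mul_of_nonneg_left (relEntropy_le_renyiRel (hρ i) hAv ha.1) (hp i)

end Ensemble

theorem renyi_half_mixture_bounds (n : ℕ) (hn : 1 ≤ n) (a : ℝ)
    (ha : a ∈ Set.Ioc (1:ℝ) 2)
    (ρ₁ ρ₂ : Matrix (Fin n) (Fin n) ℂ) (h1 : IsDensity ρ₁) (h2 : IsDensity ρ₂)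
    (hAv : ((1 / 2 : ℝ) • (ρ₁ + ρ₂)).PosDef) :
    Real.log 2
      ≥ (1 / 2) * (renyiRel a ρ₁ ((1 / 2 : ℝ) • (ρ₁ + ρ₂))
          + renyiRel a ρ₂ ((1 / 2 : ℝ) • (ρ₁ + ρ₂)))
    ∧ (1 / 2) * (renyiRel a ρ₁ ((1 / 2 : ℝ) • (ρ₁ + ρ₂))
          + renyiRel a ρ₂ ((1 / 2 : ℝ) • (ρ₁ + ρ₂)))
      ≥ vnEntropy ((1 / 2 : ℝ) • (ρ₁ + ρ₂))
          - (1 / 2) * vnEntropy ρ₁ - (1 / 2) * vnEntropy ρ₂ := by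
  have hmix : ∑ i, (1 / 2 : ℝ) • ![ρ₁, ρ₂] i = (1 / 2 : ℝ) • (ρ₁ + ρ₂) := by simp [smul_add]
  have h := renyi_half_mixture_bounds_general ha (p := fun _ ↦ 1 / 2) (fun _ ↦ by norm_num)
    (ρ := ![ρ₁, ρ₂]) (Fin.forall_fin_two.mpr ⟨h1, h2⟩) (by rwa [hmix])
  have hlog : ∑ _i : Fin 2, Real.negMulLog (1 / 2) = Real.log 2 := by
    simp [Real.negMulLog]
  rw [hmix, hlog] at h
  simp only [Fin.sum_univ_two, cons_val_zero, cons_val_one] at h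
  constructor <;> linarith [h.1, h.2]
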